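/- Let D be a finite distributive bounded lattice and d₀ ∈ D an element with no complement, i.e. for every d ∈ D either d₀ ∧ d ≠ 0 or d₀ ∨ d ≠ 1. Let ⊢ be the entailment relation of D-valued lattice maps on the four-element lattice 2² = {(0,0),(0,1),(1,0),(1,1)}, and set X = {((0,0), 0_D), ((1,1), 1_D), ((0,1), d₀)}. Then: (a) for every d ∈ D the set X ∪ {((1,0), d)} is inconsistent, i.e. X ∪ {((1,0), d)} ⊢ ∅; and hence (b) X ⊢ ∅. -/

import Mathlib

/-- An entailment relation on a set `S`: a relation between finite subsets of `S`
satisfying reflexivity (R), monotonicity (M) and transitivity/cut (T). -/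
def IsEntailment {S : Type*} [DecidableEq S] (E : Finset S → Finset S → Prop) : Prop :=
  (∀ X Y : Finset S, (∃ x, x ∈ X ∧ x ∈ Y) → E X Y) ∧
  (∀ X X' Y Y' : Finset S, E X Y → E (X ∪ X') (Y ∪ Y')) ∧
  (∀ X Y : Finset S, ∀ z : S, E X (insert z Y) → E (insert z X) Y → E X Y)

variable (M : Type*) (D : Type*) [Lattice M] [BoundedOrder M] [Lattice D] [BoundedOrder D]
  [Fintype D] [DecidableEq M] [DecidableEq D]

/-- The generating axioms (s), (∧), (∨), (0), (1), (t) for the entailment relation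
of `D`-valued lattice maps on `M`. -/
def LatticeAxioms : Finset (M × D) → Finset (M × D) → Prop := fun X Y =>
  (∃ x a b, a ≠ b ∧ X = {(x, a), (x, b)} ∧ Y = ∅) ∨
  (∃ x y a b, X = {(x, a), (y, b)} ∧ Y = {(x ⊓ y, a ⊓ b)}) ∨
  (∃ x y a b, X = {(x, a), (y, b)} ∧ Y = {(x ⊔ y, a ⊔ b)}) ∨
  (X = ∅ ∧ Y = {((⊥ : M), (⊥ : D))}) ∨
  (X = ∅ ∧ Y = {((⊤ : M), (⊤ : D))}) ∨
  (∃ x : M, X = ∅ ∧ Y = Finset.univ.image (fun a : D => (x, a)))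

/-- The least entailment relation on `M × D` containing all the generating axioms:
the entailment relation of `D`-valued lattice maps on `M`. -/
def LatticeEntails (X Y : Finset (M × D)) : Prop :=
  ∀ E : Finset (M × D) → Finset (M × D) → Prop,
    IsEntailment E → (∀ X' Y', LatticeAxioms M D X' Y' → E X' Y') → E X Y

theorem ent_mono {S : Type*} [DecidableEq S] {E : Finset S → Finset S → Prop}
    (hE : IsEntailment E) {X X' Y Y' : Finset S} (h : E X Y) (hX : X ⊆ X') (hY : Y ⊆ Y') :
    E X' Y' := by
  have := hE.2.1 X X' Y Y' h
  rwa [Finset.union_eq_right.2 hX, Finset.union_eq_right.2 hY] at this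

theorem ent_cut_all {S : Type*} [DecidableEq S] {E : Finset S → Finset S → Prop}
    (hE : IsEntailment E) (X Y : Finset S) (h : E X Y)
    (hY : ∀ z ∈ Y, E (insert z X) ∅) : E X ∅ := by
  induction Y using Finset.induction_on with
  | empty => exact h
  | insert z Y _ ih =>
    refine ih (hE.2.2 X Y z h ?_) fun w hw => hY w (Finset.mem_insert_of_mem hw)
    exact ent_mono hE (hY z (Finset.mem_insert_self _ _)) subset_rfl (Finset.empty_subset _)

theorem ent_clash {M D : Type*} [DecidableEq M] [DecidableEq D]
    {E : Finset (M × D) → Finset (M × D) → Prop} (hE : IsEntailment E)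
    (hs : ∀ x a b, a ≠ b → E {(x, a), (x, b)} ∅)
    {W X : Finset (M × D)} {z : M} {c c' : D} (h : E X {(z, c)}) (hX : X ⊆ W)
    (hz : (z, c') ∈ W) (hc : c ≠ c') : E W ∅ := by
  refine ent_cut_all hE W {(z, c)} (ent_mono hE h hX subset_rfl) ?_
  intro w hw
  rw [Finset.mem_singleton] at hw
  subst hw
  refine ent_mono hE (hs z c c' hc) ?_ subset_rfl
  intro v hv
  simp only [Finset.mem_insert, Finset.mem_singleton] at hv ⊢
  rcases hv with rfl | rfl
  · exact Or.inl rfl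
  · exact Or.inr hz

theorem stmt19 {D : Type*} [DistribLattice D] [BoundedOrder D] [Fintype D] [DecidableEq D]
    (d₀ : D) (h : ∀ d : D, d₀ ⊓ d ≠ ⊥ ∨ d₀ ⊔ d ≠ ⊤) :
    (∀ d : D, LatticeEntails (Bool × Bool) D
        (insert ((true, false), d)
          {((false, false), (⊥ : D)), ((true, true), (⊤ : D)), ((false, true), d₀)}) ∅) ∧
    LatticeEntails (Bool × Bool) D
      {((false, false), (⊥ : D)), ((true, true), (⊤ : D)), ((false, true), d₀)} ∅ := by
  have key : ∀ d : D, LatticeEntails (Bool × Bool) D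
        (insert ((true, false), d)
          {((false, false), (⊥ : D)), ((true, true), (⊤ : D)), ((false, true), d₀)}) ∅ := by
    intro d E hE hA
    have hs : ∀ (x : Bool × Bool) (a b : D), a ≠ b → E {(x, a), (x, b)} ∅ :=
      fun x a b hab => hA _ _ (Or.inl ⟨x, a, b, hab, rfl, rfl⟩)
    rcases h d with h1 | h1
    · have h2 : E {((false, true), d₀), ((true, false), d)} {((false, false), d₀ ⊓ d)} :=
        hA _ _ (Or.inr (Or.inl ⟨(false, true), (true, false), d₀, d, rfl, rfl⟩))
      refine ent_clash hE hs h2 ?_ (c' := ⊥) (by simp) h1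
      intro v hv
      simp only [Finset.mem_insert, Finset.mem_singleton] at hv ⊢
      tauto
    · have h2 : E {((false, true), d₀), ((true, false), d)} {((true, true), d₀ ⊔ d)} :=
        hA _ _ (Or.inr (Or.inr (Or.inl ⟨(false, true), (true, false), d₀, d, rfl, rfl⟩)))
      refine ent_clash hE hs h2 ?_ (c' := ⊤) (by simp) h1
      intro v hv
      simp only [Finset.mem_insert, Finset.mem_singleton] at hv ⊢
      tauto
  refine ⟨key, ?_⟩
  intro E hE hA
  refine ent_cut_all hE _ (Finset.univ.image (fun a : D => (((true, false) : Bool × Bool), a)))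
    (ent_mono hE (hA ∅ _ ?_) (Finset.empty_subset _) subset_rfl) ?_
  · exact Or.inr (Or.inr (Or.inr (Or.inr (Or.inr ⟨(true, false), rfl, rfl⟩))))
  · intro z hz
    obtain ⟨a, -, rfl⟩ := Finset.mem_image.1 hz
    exact key a E hE hA
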